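/- arXiv:2104.05907 — 5 statements merged into one kernel-verified Lean document; each statement's English description precedes it below -/
import Mathlib

section
/- For every positive integer k, the k-th Burling graph G'_k is isomorphic to an induced subgraph of G_k; in fact G'_k is isomorphic to G_k ∖ T_k. -/
universe u

/-- A *wheel* is a graph consisting of an induced cycle of length at least 4 together with a
single additional vertex (the hub) having at least 3 neighbours on the cycle. -/
def IsWheel {V : Type u} (G : SimpleGraph V) : Prop :=
  ∃ (w : V) (n : ℕ), 4 ≤ n ∧
    Nonempty (G.induce {u | u ≠ w} ≃g SimpleGraph.cycleGraph n) ∧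
    3 ≤ (G.neighborSet w).ncard

/-- A graph is a *fan with pivot `f`* if deleting `f` leaves an induced path and `f` has at
least 3 neighbours (necessarily on that path). -/
def IsFanWithPivot {V : Type u} (G : SimpleGraph V) (f : V) : Prop :=
  (∃ n : ℕ, Nonempty (G.induce {u | u ≠ f} ≃g SimpleGraph.pathGraph n)) ∧
    3 ≤ (G.neighborSet f).ncard

/-- A *fan* is a graph consisting of an induced path and a single additional vertex (the pivot)
with at least 3 neighbours on the path. -/
def IsFan {V : Type u} (G : SimpleGraph V) : Prop :=
  ∃ f : V, IsFanWithPivot G f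

/-- A *guarded fan* is a graft `(F, M)` such that `F` is a fan with pivot `f` and both
endpoints of the path `F \ {f}` lie in `M`. -/
def IsGuardedFan {V : Type u} (G : SimpleGraph V) (M : Set V) : Prop :=
  ∃ (f : V) (n : ℕ) (e : G.induce {u | u ≠ f} ≃g SimpleGraph.pathGraph (n + 1)),
    3 ≤ (G.neighborSet f).ncard ∧
    ((e.symm 0 : {u // u ≠ f}) : V) ∈ M ∧ ((e.symm (Fin.last n) : {u // u ≠ f}) : V) ∈ M

/-- A *mountable path* is a graft `(P, M)` such that `P` is a path and `|M| ≥ 3`. -/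
def IsMountablePath {V : Type u} (G : SimpleGraph V) (M : Set V) : Prop :=
  (∃ n : ℕ, Nonempty (G ≃g SimpleGraph.pathGraph n)) ∧ 3 ≤ M.ncard

/-- A *theta* is a graph consisting of three internally vertex-disjoint paths of length at
least 2 with common endpoints, such that every edge lies on one of the three paths. -/
def IsTheta {V : Type u} (G : SimpleGraph V) : Prop :=
  ∃ (a b : V) (p₁ p₂ p₃ : G.Walk a b),
    a ≠ b ∧ p₁.IsPath ∧ p₂.IsPath ∧ p₃.IsPath ∧
    2 ≤ p₁.length ∧ 2 ≤ p₂.length ∧ 2 ≤ p₃.length ∧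
    (∀ v, v ∈ p₁.support → v ∈ p₂.support → v = a ∨ v = b) ∧
    (∀ v, v ∈ p₁.support → v ∈ p₃.support → v = a ∨ v = b) ∧
    (∀ v, v ∈ p₂.support → v ∈ p₃.support → v = a ∨ v = b) ∧
    (∀ v : V, v ∈ p₁.support ∨ v ∈ p₂.support ∨ v ∈ p₃.support) ∧
    (∀ e ∈ G.edgeSet, e ∈ p₁.edges ∨ e ∈ p₂.edges ∨ e ∈ p₃.edges)

/-- A graft `(G, T)` is *clean* if (1) `G` is triangle-free, (2) `T` is a stable set,
(3) `G` contains no induced wheel, (4) `(G,T)` contains no induced guarded fan, and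
(5) `(G,T)` contains no induced mountable path. -/
def IsCleanGraft {V : Type u} (G : SimpleGraph V) (T : Set V) : Prop :=
  G.CliqueFree 3 ∧
  (∀ u ∈ T, ∀ v ∈ T, ¬ G.Adj u v) ∧
  (∀ s : Set V, ¬ IsWheel (G.induce s)) ∧
  (∀ s : Set V, ¬ IsGuardedFan (G.induce s) (Subtype.val ⁻¹' T)) ∧
  (∀ s : Set V, ¬ IsMountablePath (G.induce s) (Subtype.val ⁻¹' T))

/-- The graph of `pendent((G,T),t)`: a new vertex (`none`) is added whose only
neighbour is `t`. -/
def pendentGraph {V : Type u} (G : SimpleGraph V) (t : V) : SimpleGraph (Option V) :=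
  SimpleGraph.fromRel (fun a b =>
    (∃ u v : V, a = some u ∧ b = some v ∧ G.Adj u v) ∨ (a = none ∧ b = some t))

/-- The distinguished set of `pendent((G,T),t)`: `T' = (T ∪ {t'}) \ {t}`. -/
def pendentT {V : Type u} (T : Set V) (t : V) : Set (Option V) :=
  insert none (some '' (T \ {t}))

/-- The graph of `clone((G,T),t)`: a new vertex (`none`) is added whose neighbourhood is
exactly the neighbourhood of `t` in `G`. -/
def cloneGraph {V : Type u} (G : SimpleGraph V) (t : V) : SimpleGraph (Option V) :=
  SimpleGraph.fromRel (fun a b =>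
    (∃ u v : V, a = some u ∧ b = some v ∧ G.Adj u v) ∨
    (∃ v : V, a = none ∧ b = some v ∧ G.Adj t v))

/-- The distinguished set of `clone((G,T),t)`: `T' = T ∪ {t'}`. -/
def cloneT {V : Type u} (T : Set V) : Set (Option V) :=
  insert none (some '' T)

/-- The graph of `join((G₁,T₁), X, (G₂,T₂))`, where the bijection `φ : X ≃ T₂` prescribes
which vertex of `T₂` is identified with which vertex of `X`. -/
def joinGraph {V₁ V₂ : Type u} (G₁ : SimpleGraph V₁) (G₂ : SimpleGraph V₂)
    (X : Set V₁) (T₂ : Set V₂) (φ : X ≃ T₂) :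
    SimpleGraph (V₁ ⊕ {v : V₂ // v ∉ T₂}) :=
  SimpleGraph.fromRel (fun a b =>
    (∃ u v : V₁, a = Sum.inl u ∧ b = Sum.inl v ∧ G₁.Adj u v) ∨
    (∃ u v : {v : V₂ // v ∉ T₂}, a = Sum.inr u ∧ b = Sum.inr v ∧ G₂.Adj ↑u ↑v) ∨
    (∃ (x : X) (w : {v : V₂ // v ∉ T₂}), a = Sum.inl ↑x ∧ b = Sum.inr w ∧ G₂.Adj ↑(φ x) ↑w) ∨
    (∃ x y : X, a = Sum.inl ↑x ∧ b = Sum.inl ↑y ∧ G₂.Adj ↑(φ x) ↑(φ y)))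

/-- The distinguished set of `join((G₁,T₁), X, (G₂,T₂))` is `T₁`. -/
def joinT {V₁ V₂ : Type u} (T₁ : Set V₁) (T₂ : Set V₂) : Set (V₁ ⊕ {v : V₂ // v ∉ T₂}) :=
  Sum.inl '' T₁

/-- A *graph–stable-set pair*: a graph together with a set of (stable) sets of vertices. -/
structure GSPair : Type 1 where
  V : Type
  G : SimpleGraph V
  S : Set (Set V)

/-- The `NEXT` procedure of the Burling construction.  The new vertex type consists of the
original vertices, the vertices `(S, u)` of the copy `H_S` for each `S ∈ 𝒮`, and the new
vertices `v_{S,T}` for `S ∈ 𝒮` and `T ∈ 𝒮(H_S)`. -/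
def NEXT (P : GSPair) : GSPair where
  V := P.V ⊕ ((↥P.S × P.V) ⊕ (↥P.S × ↥P.S))
  G := SimpleGraph.fromRel (fun a b =>
    (∃ u v : P.V, a = Sum.inl u ∧ b = Sum.inl v ∧ P.G.Adj u v) ∨
    (∃ (S : ↥P.S) (u v : P.V),
      a = Sum.inr (Sum.inl (S, u)) ∧ b = Sum.inr (Sum.inl (S, v)) ∧ P.G.Adj u v) ∨
    (∃ (S T : ↥P.S) (u : P.V),
      a = Sum.inr (Sum.inr (S, T)) ∧ b = Sum.inr (Sum.inl (S, u)) ∧ u ∈ (T : Set P.V)))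
  S := { A | ∃ S T : ↥P.S,
      A = Sum.inl '' (S : Set P.V) ∪ (fun u => Sum.inr (Sum.inl (S, u))) '' (T : Set P.V) ∨
      A = insert (Sum.inr (Sum.inr (S, T))) (Sum.inl '' (S : Set P.V)) }

/-- `BurlingPair k` is the graph–stable-set pair `(G'_{k+1}, 𝒮_{k+1})`; in particular
`BurlingPair 0 = (K₁, {V(K₁)})` and `(BurlingPair (k-1)).G` is the `k`-th Burling graph. -/
def BurlingPair : ℕ → GSPair
  | 0 => ⟨Unit, ⊥, {Set.univ}⟩
  | (k + 1) => NEXT (BurlingPair k)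

/-- A *graft*: a graph together with a distinguished set of vertices. -/
structure GraftData : Type 1 where
  V : Type
  G : SimpleGraph V
  T : Set V

/-- The step `(G_k, T_k) ↦ (G_{k+1}, T_{k+1})` of the graft construction of Burling graphs,
with all the pendent, clone and join operations of the construction performed at once.

Vertices: `inl x` for `x ∈ V(G_k)`; `inr (inl ⟨u, w⟩)` for `u ∈ T_k` and
`w : ↥T_k ⊕ ↥T_k` with `w ≠ inl u`, the `2|T_k| - 1` clones of `u` (so that
`X_u = {u} ∪ {⟨u, w⟩}` has been identified with `S'_u ≃ T_k ⊕ T_k`, the vertex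
indexed by `inl v` being the copy of `v` in `S_u` and the vertex indexed by `inr v`
being the pendant `t_{u,v}`); and `inr (inr (u, y))` for the vertices of the copy
`H'_u` not in `S'_u`, namely `y = inl x` for a copy of `x ∈ V(G_k) \ T_k` and
`y = inr v` for the clone `v_u` of `v ∈ T_k`. -/
def nextGraft (P : GraftData) : GraftData where
  V := P.V ⊕ ((Σ u : ↥P.T, {w : ↥P.T ⊕ ↥P.T // w ≠ Sum.inl u}) ⊕
        (↥P.T × ({v : P.V // v ∉ P.T} ⊕ ↥P.T)))
  G := SimpleGraph.fromRel (fun a b =>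
    -- edges of `G_k`
    (∃ x y : P.V, a = Sum.inl x ∧ b = Sum.inl y ∧ P.G.Adj x y) ∨
    -- each clone of `u` is adjacent to `N_{G_k}(u)`
    (∃ (x : P.V) (u : ↥P.T) (w : {w : ↥P.T ⊕ ↥P.T // w ≠ Sum.inl u}),
      a = Sum.inl x ∧ b = Sum.inr (Sum.inl ⟨u, w⟩) ∧ P.G.Adj ↑u x) ∨
    -- `u` (identified with the copy of `u` in `S_u`) is adjacent to the copies of `N_{G_k}(u)`
    (∃ (u : ↥P.T) (x : {v : P.V // v ∉ P.T}),
      a = Sum.inl ↑u ∧ b = Sum.inr (Sum.inr (u, Sum.inl x)) ∧ P.G.Adj ↑u ↑x) ∨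
    -- the clone of `u` identified with the copy of `v ∈ S_u` is adjacent to copies of `N(v)`
    (∃ (u : ↥P.T) (w : {w : ↥P.T ⊕ ↥P.T // w ≠ Sum.inl u}) (v : ↥P.T)
        (x : {v : P.V // v ∉ P.T}),
      a = Sum.inr (Sum.inl ⟨u, w⟩) ∧ b = Sum.inr (Sum.inr (u, Sum.inl x)) ∧
        (w : ↥P.T ⊕ ↥P.T) = Sum.inl v ∧ P.G.Adj ↑v ↑x) ∨
    -- the clone of `u` identified with the pendant `t_{u,v}` is adjacent to the clone `v_u`
    (∃ (u : ↥P.T) (w : {w : ↥P.T ⊕ ↥P.T // w ≠ Sum.inl u}) (v : ↥P.T),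
      a = Sum.inr (Sum.inl ⟨u, w⟩) ∧ b = Sum.inr (Sum.inr (u, Sum.inr v)) ∧
        (w : ↥P.T ⊕ ↥P.T) = Sum.inr v) ∨
    -- edges of `G_k` inside the copy `H'_u`
    (∃ (u : ↥P.T) (x y : {v : P.V // v ∉ P.T}),
      a = Sum.inr (Sum.inr (u, Sum.inl x)) ∧ b = Sum.inr (Sum.inr (u, Sum.inl y)) ∧
        P.G.Adj ↑x ↑y) ∨
    -- the clone `v_u` is adjacent to the copies of `N_{G_k}(v)`
    (∃ (u : ↥P.T) (x : {v : P.V // v ∉ P.T}) (v : ↥P.T),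
      a = Sum.inr (Sum.inr (u, Sum.inl x)) ∧ b = Sum.inr (Sum.inr (u, Sum.inr v)) ∧
        P.G.Adj ↑v ↑x))
  T := { a | (∃ u ∈ P.T, a = Sum.inl u) ∨
      (∃ c : (Σ u : ↥P.T, {w : ↥P.T ⊕ ↥P.T // w ≠ Sum.inl u}), a = Sum.inr (Sum.inl c)) }

/-- `BurlingGraft k` is the graft `(G_{k+1}, T_{k+1})`; in particular
`BurlingGraft 0 = (K₂, {t})`. -/
def BurlingGraft : ℕ → GraftData
  | 0 => ⟨Bool, ⊤, {true}⟩
  | (k + 1) => nextGraft (BurlingGraft k)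

/-- The graph `G*` obtained from a graph–stable-set pair by adding, for each `S ∈ 𝒮`,
a new vertex `v_S` whose neighbourhood is exactly `S`. -/
def GStar (P : GSPair) : SimpleGraph (P.V ⊕ ↥P.S) :=
  SimpleGraph.fromRel (fun a b =>
    (∃ u v : P.V, a = Sum.inl u ∧ b = Sum.inl v ∧ P.G.Adj u v) ∨
    (∃ (S : ↥P.S) (u : P.V), a = Sum.inr S ∧ b = Sum.inl u ∧ u ∈ (S : Set P.V)))

/-- The grafts obtainable from the graft `(K₂, {t})` by a finite sequence of pendent,
clone and join operations. -/
inductive Obtainable : GraftData → Prop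
  | base : Obtainable ⟨Bool, ⊤, {true}⟩
  | pendent (P : GraftData) (hP : Obtainable P) (t : P.V) (ht : t ∈ P.T) :
      Obtainable ⟨Option P.V, pendentGraph P.G t, pendentT P.T t⟩
  | clone (P : GraftData) (hP : Obtainable P) (t : P.V) (ht : t ∈ P.T) :
      Obtainable ⟨Option P.V, cloneGraph P.G t, cloneT P.T⟩
  | join (P Q : GraftData) (hP : Obtainable P) (hQ : Obtainable Q)
      (X : Set P.V) (hX : X ⊆ P.T)
      (hnb : ∀ x ∈ X, ∀ y ∈ X, P.G.neighborSet x = P.G.neighborSet y)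
      (φ : X ≃ ↥Q.T) :
      Obtainable ⟨P.V ⊕ {v : Q.V // v ∉ Q.T}, joinGraph P.G Q.G X Q.T φ, Sum.inl '' P.T⟩

/-!
Let `G*` be the graph obtained from a graph with a family of vertex sets by attaching to each set a
vertex with that neighbourhood. `NEXT` adds `|𝒮|` disjoint copies of `G*` to `G`. The step
of the graft construction does the same to `G ∖ T`, with the neighbourhoods of the vertices of `T`
as the family: outside `S'_u`, the copy `H'_u` is `(G ∖ T)*`, the clone `v_u` playing the role of
`v_{u,v}`. A vertex of `X_u` has the neighbours of `u` in `G` and, in `H'_u`, those of some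
`v ∈ S_u` or of a pendent vertex `t_{u,v}`; these are the sets `S ∪ T` and `S ∪ {v_{S,T}}` of
`NEXT`. So the isomorphism is found by induction together with a bijection from `𝒮_k` to `T_k`
taking each set to the vertex it is the neighbourhood of.
-/

section SetFamily

variable {V W I J : Type*}

/-- The graph `G*` of a graph with an indexed family of vertex sets: for every index `i` a vertex
`inr i` with neighbourhood `S i` is added to `G`. Indexing lets the sets of a `GSPair` and the
distinguished vertices of a graft play the same role. -/
def starGraph (G : SimpleGraph V) (S : I → Set V) : SimpleGraph (V ⊕ I) where
  Adj
    | .inl v, .inl w => G.Adj v w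
    | .inl v, .inr i => v ∈ S i
    | .inr i, .inl v => v ∈ S i
    | .inr _, .inr _ => False
  symm.symm
    | .inl _, .inl _ => G.adj_symm
    | .inl _, .inr _ | .inr _, .inl _ | .inr _, .inr _ => id

section
variable {G : SimpleGraph V} {S : I → Set V} {v w : V} {i j : I}

@[simp] theorem starGraph_adj_inl_inl : (starGraph G S).Adj (.inl v) (.inl w) ↔ G.Adj v w := .rfl

@[simp] theorem starGraph_adj_inl_inr : (starGraph G S).Adj (.inl v) (.inr i) ↔ v ∈ S i := .rfl

@[simp] theorem starGraph_adj_inr_inl : (starGraph G S).Adj (.inr i) (.inl v) ↔ v ∈ S i := .rfl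

@[simp] theorem starGraph_not_adj_inr_inr : ¬ (starGraph G S).Adj (.inr i) (.inr j) := id

end

/-- The vertex sets of `G*` that a set of `NEXT` can cut out of a copy of `G*`: `inl j` indexes the
set `S j`, and `inr j` the singleton of the vertex `inr j` attached to `S j`. -/
def starFamily (S : I → Set V) : I ⊕ I → Set (V ⊕ I)
  | .inl j => .inl '' S j
  | .inr j => {.inr j}

section
variable {S : I → Set V} {v : V} {i j : I}

@[simp] theorem inl_mem_starFamily_inl : .inl v ∈ starFamily S (.inl j) ↔ v ∈ S j :=
  Sum.inl_injective.mem_set_image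

@[simp] theorem inr_notMem_starFamily_inl : .inr i ∉ starFamily S (.inl j) := by
  simp [starFamily]

@[simp] theorem inl_notMem_starFamily_inr : .inl v ∉ starFamily S (.inr j) := by
  simp [starFamily]

@[simp] theorem inr_mem_starFamily_inr : .inr i ∈ starFamily S (.inr j) ↔ i = j :=
  Sum.inr.inj_iff

end

theorem starFamily_injective {S : I → Set V} (hS : S.Injective) : (starFamily S).Injective := by
  rintro (j | j) (j' | j') h
  · rw [hS (Sum.inl_injective.image_injective h)]
  · simpa using Set.ext_iff.1 h (.inr j')
  · simpa using Set.ext_iff.1 h (.inr j)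
  · rw [Sum.inr_injective (Set.singleton_injective h)]

/-- The graph of `NEXT`: since `v_{i,j}` is attached to the set `S j` of the `i`-th copy of `G`,
the copies together with the new vertices are disjoint copies of `G*`. -/
def nextGraph (G : SimpleGraph V) (S : I → Set V) : SimpleGraph (V ⊕ I × (V ⊕ I)) :=
  G ⊕g ((⊥ : SimpleGraph I) □ starGraph G S)

/-- The sets of `NEXT`: `(i, inl j)` indexes the union of `S i` with the set `S j` of the `i`-th
copy of `G`, and `(i, inr j)` the set `S i ∪ {v_{i,j}}`. -/
def nextFamily (S : I → Set V) (p : I × (I ⊕ I)) : Set (V ⊕ I × (V ⊕ I)) :=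
  .inl '' S p.1 ∪ (fun a ↦ .inr (p.1, a)) '' starFamily S p.2

@[simp] theorem inl_mem_nextFamily {S : I → Set V} {i : I} {x : I ⊕ I} {v : V} :
    .inl v ∈ nextFamily S (i, x) ↔ v ∈ S i := by
  simp [nextFamily]

@[simp] theorem inr_mem_nextFamily {S : I → Set V} {i j : I} {x : I ⊕ I} {a : V ⊕ I} :
    .inr (j, a) ∈ nextFamily S (i, x) ↔ j = i ∧ a ∈ starFamily S x := by
  simp [nextFamily, -Sum.exists, and_comm, eq_comm]

theorem nextFamily_injective {S : I → Set V} (hS : S.Injective) : (nextFamily S).Injective := by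
  rintro ⟨i, x⟩ ⟨i', x'⟩ h
  have mem_iff a := Set.ext_iff.1 h a
  obtain rfl : i = i' := hS <| Set.ext fun v ↦ by simpa using mem_iff (.inl v)
  obtain rfl : x = x' :=
    starFamily_injective hS <| Set.ext fun a ↦ by simpa using mem_iff (.inr (i, a))
  rfl

/-- An isomorphism of graphs with families of vertex sets: a graph isomorphism together with a
bijection of the indices under which it maps the sets of one family to those of the other. -/
structure FamilyIso (G : SimpleGraph V) (S : I → Set V) (H : SimpleGraph W) (T : J → Set W) where
  graphIso : G ≃g H
  indexEquiv : I ≃ J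
  map_mem_iff (i : I) (v : V) : graphIso v ∈ T (indexEquiv i) ↔ v ∈ S i

namespace FamilyIso

variable {X K : Type*} {G : SimpleGraph V} {S : I → Set V} {H : SimpleGraph W} {T : J → Set W}
  {F : SimpleGraph X} {R : K → Set X}

def symm (φ : FamilyIso G S H T) : FamilyIso H T G S where
  graphIso := φ.graphIso.symm
  indexEquiv := φ.indexEquiv.symm
  map_mem_iff j w := by simp [← φ.map_mem_iff]

def trans (φ : FamilyIso G S H T) (ψ : FamilyIso H T F R) : FamilyIso G S F R where
  graphIso := φ.graphIso.trans ψ.graphIso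
  indexEquiv := φ.indexEquiv.trans ψ.indexEquiv
  map_mem_iff i v := (ψ.map_mem_iff _ _).trans (φ.map_mem_iff i v)

def star (φ : FamilyIso G S H T) :
    FamilyIso (starGraph G S) (starFamily S) (starGraph H T) (starFamily T) where
  graphIso :=
    { toEquiv := φ.graphIso.toEquiv.sumCongr φ.indexEquiv
      map_rel_iff' := by rintro (v | i) (w | j) <;> simp [φ.map_mem_iff, φ.graphIso.map_adj_iff] }
  indexEquiv := φ.indexEquiv.sumCongr φ.indexEquiv
  map_mem_iff := by rintro (j | j) (v | i) <;> simp [φ.map_mem_iff]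

def next (φ : FamilyIso G S H T) :
    FamilyIso (nextGraph G S) (nextFamily S) (nextGraph H T) (nextFamily T) where
  graphIso := .sumCongr φ.graphIso
    { toEquiv := φ.indexEquiv.prodCongr φ.star.graphIso.toEquiv
      map_rel_iff' := by simp [φ.star.graphIso.map_adj_iff] }
  indexEquiv := φ.indexEquiv.prodCongr φ.star.indexEquiv
  map_mem_iff
    | (i, _), .inl v =>
      inl_mem_nextFamily.trans <| (φ.map_mem_iff i v).trans inl_mem_nextFamily.symm
    | (_, x), .inr (_, a) =>
      inr_mem_nextFamily.trans <|
        (and_congr φ.indexEquiv.injective.eq_iff (φ.star.map_mem_iff x a)).trans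
          inr_mem_nextFamily.symm

end FamilyIso
end SetFamily

namespace NEXT

variable (P : GSPair)

/-- Groups each copy `H_S` with its vertices `v_{S,T}`. -/
def regroup : P.V ⊕ P.S × (P.V ⊕ P.S) ≃ P.V ⊕ (P.S × P.V ⊕ P.S × P.S) :=
  (Equiv.refl _).sumCongr (.prodSumDistrib _ _ _)

theorem adj_regroup_iff (a b : P.V ⊕ P.S × (P.V ⊕ P.S)) :
    (NEXT P).G.Adj (regroup P a) (regroup P b) ↔
      (nextGraph P.G ((↑) : P.S → Set P.V)).Adj a b := by
  rcases a with v | ⟨S, v | T⟩ <;> rcases b with w | ⟨S', w | T'⟩ <;>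
    simp only [NEXT, regroup, nextGraph, Equiv.sumCongr_apply, Equiv.coe_refl, Sum.map_inl,
      Sum.map_inr, id_eq, Equiv.prodSumDistrib_apply_left, Equiv.prodSumDistrib_apply_right,
      SimpleGraph.fromRel_adj, SimpleGraph.sum_adj, SimpleGraph.boxProd_adj, SimpleGraph.bot_adj,
      starGraph_adj_inl_inl, starGraph_adj_inl_inr, starGraph_adj_inr_inl,
      starGraph_not_adj_inr_inr, Sum.inl.injEq, Sum.inr.injEq, Prod.mk.injEq, reduceCtorEq,
      false_and, and_false, exists_false] <;>
    grind [SimpleGraph.Adj.ne, SimpleGraph.adj_comm]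

/-- `nextGraph` is the graph of `NEXT`, up to the grouping of the new vertices. -/
def graphIso : nextGraph P.G ((↑) : P.S → Set P.V) ≃g (NEXT P).G where
  toEquiv := regroup P
  map_rel_iff' := adj_regroup_iff P _ _

theorem range_image_nextFamily :
    Set.range (fun p ↦ graphIso P '' nextFamily ((↑) : P.S → Set P.V) p) = (NEXT P).S := by
  have image_inl (S T : P.S) : graphIso P '' nextFamily (↑) (S, .inl T) =
      .inl '' (S : Set P.V) ∪ (fun v ↦ .inr (.inl (S, v))) '' (T : Set P.V) := by
    rw [nextFamily, starFamily, Set.image_union, Set.image_image, Set.image_image, Set.image_image]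
    rfl
  have image_inr (S T : P.S) : graphIso P '' nextFamily (↑) (S, .inr T) =
      insert (.inr (.inr (S, T))) (.inl '' (S : Set P.V)) := by
    rw [nextFamily, starFamily, Set.image_singleton, Set.union_singleton, Set.image_insert_eq,
      Set.image_image]
    rfl
  ext A
  constructor
  · rintro ⟨⟨S, T | T⟩, rfl⟩
    exacts [⟨S, T, .inl (image_inl S T)⟩, ⟨S, T, .inr (image_inr S T)⟩]
  · rintro ⟨S, T, rfl | rfl⟩
    exacts [⟨(S, .inl T), image_inl S T⟩, ⟨(S, .inr T), image_inr S T⟩]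

/-- `graphIso` maps the sets of `nextFamily` onto those of `NEXT`. -/
noncomputable def familyIso :
    FamilyIso (nextGraph P.G ((↑) : P.S → Set P.V)) (nextFamily (↑)) (NEXT P).G
      ((↑) : (NEXT P).S → Set (NEXT P).V) where
  graphIso := graphIso P
  indexEquiv :=
    (Equiv.ofInjective _ <|
      (graphIso P).injective.image_injective.comp <|
        nextFamily_injective Subtype.val_injective).trans
      (Equiv.setCongr (range_image_nextFamily P))
  map_mem_iff _ _ := (graphIso P).injective.mem_set_image

end NEXT

namespace GraftData

variable (Q : GraftData)

/-- The graph `G ∖ T` of a graft. -/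
abbrev core : SimpleGraph {v | v ∉ Q.T} := Q.G.induce {v | v ∉ Q.T}

/-- The neighbourhoods in `G ∖ T` of the vertices of `T`: the family of vertex sets of `G ∖ T`
that corresponds to the stable sets of a `GSPair`. -/
def coreNbhd (t : Q.T) : Set {v | v ∉ Q.T} := {x | Q.G.Adj t x}

variable {Q} in
@[simp] theorem mem_coreNbhd {t : Q.T} {x : {v | v ∉ Q.T}} : x ∈ Q.coreNbhd t ↔ Q.G.Adj t x := .rfl

end GraftData

namespace nextGraft

variable {Q : GraftData}

/-- The clones of the vertices `u ∈ T`, without the vertices `u` themselves. -/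
abbrev Clone (Q : GraftData) : Type := Σ u : Q.T, {w : Q.T ⊕ Q.T // w ≠ .inl u}

/-- The vertex type of `nextGraft Q`, spelled out so that `simp` sees the constructors of its
elements. -/
abbrev Vertex (Q : GraftData) : Type := Q.V ⊕ Clone Q ⊕ Q.T × ({v // v ∉ Q.T} ⊕ Q.T)

theorem adj_inl_inl {x y : Q.V} :
    (nextGraft Q).G.Adj (.inl x : Vertex Q) (.inl y : Vertex Q) ↔ Q.G.Adj x y := by
  change (SimpleGraph.fromRel (V := Vertex Q) _).Adj _ _ ↔ _
  rw [SimpleGraph.fromRel_adj]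
  simp only [reduceCtorEq, false_and, and_false, exists_false, or_false, Sum.inl.injEq]
  grind [SimpleGraph.Adj.ne, SimpleGraph.adj_comm]

theorem adj_inl_copy {x : Q.V} {u : Q.T} {y : {v // v ∉ Q.T} ⊕ Q.T} :
    (nextGraft Q).G.Adj (.inl x : Vertex Q) (.inr (.inr (u, y)) : Vertex Q) ↔
      x = u ∧ y ∈ starFamily Q.coreNbhd (.inl u) := by
  change (SimpleGraph.fromRel (V := Vertex Q) _).Adj _ _ ↔ _
  rw [SimpleGraph.fromRel_adj]
  simp only [reduceCtorEq, false_and, and_false, exists_false, false_or, or_false, Sum.inl.injEq,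
    Sum.inr.injEq, Prod.mk.injEq]
  rcases y with y | v
  · simp only [Sum.inl.injEq, inl_mem_starFamily_inl, GraftData.mem_coreNbhd]
    grind
  · simp only [reduceCtorEq, false_and, and_false, exists_false, inr_notMem_starFamily_inl]

theorem adj_copy_copy {u u' : Q.T} {y y' : {v // v ∉ Q.T} ⊕ Q.T} :
    (nextGraft Q).G.Adj (.inr (.inr (u, y)) : Vertex Q) (.inr (.inr (u', y')) : Vertex Q) ↔
      u = u' ∧ (starGraph Q.core Q.coreNbhd).Adj y y' := by
  change (SimpleGraph.fromRel (V := Vertex Q) _).Adj _ _ ↔ _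
  rw [SimpleGraph.fromRel_adj]
  simp only [reduceCtorEq, false_and, and_false, exists_false, false_or, Sum.inr.injEq,
    Prod.mk.injEq]
  rcases y with y | v <;> rcases y' with y' | v' <;>
    simp only [starGraph_adj_inl_inl, starGraph_adj_inl_inr, starGraph_adj_inr_inl,
      starGraph_not_adj_inr_inr, GraftData.mem_coreNbhd, SimpleGraph.comap_adj,
      Function.Embedding.subtype_apply] <;>
    grind [SimpleGraph.Adj.ne, SimpleGraph.adj_comm]

theorem adj_clone_inl {c : Clone Q} {x : Q.V} :
    (nextGraft Q).G.Adj (.inr (.inl c) : Vertex Q) (.inl x : Vertex Q) ↔ Q.G.Adj c.1 x := by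
  change (SimpleGraph.fromRel (V := Vertex Q) _).Adj _ _ ↔ _
  rw [SimpleGraph.fromRel_adj]
  simp only [reduceCtorEq, false_and, and_false, exists_false, false_or, or_false, Sum.inl.injEq,
    Sum.inr.injEq]
  grind

theorem adj_clone_copy {c : Clone Q} {u : Q.T} {y : {v // v ∉ Q.T} ⊕ Q.T} :
    (nextGraft Q).G.Adj (.inr (.inl c) : Vertex Q) (.inr (.inr (u, y)) : Vertex Q) ↔
      u = c.1 ∧ y ∈ starFamily Q.coreNbhd c.2 := by
  change (SimpleGraph.fromRel (V := Vertex Q) _).Adj _ _ ↔ _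
  rw [SimpleGraph.fromRel_adj]
  simp only [reduceCtorEq, false_and, and_false, exists_false, false_or, or_false, Sum.inl.injEq,
    Sum.inr.injEq, Prod.mk.injEq]
  obtain ⟨u', w | w, hw⟩ := c <;> rcases y with y | v <;>
    simp only [inl_mem_starFamily_inl, inr_notMem_starFamily_inl, inl_notMem_starFamily_inr,
      inr_mem_starFamily_inr, GraftData.mem_coreNbhd] <;>
    grind

/-- The vertices of `nextGraft Q` outside its distinguished set, indexed by the vertices of
`nextGraph Q.core Q.coreNbhd`: the clone `v_u` is the vertex attached to the neighbourhood of `v` in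
the copy indexed by `u`. -/
def retained : {v | v ∉ Q.T} ⊕ Q.T × ({v | v ∉ Q.T} ⊕ Q.T) → Vertex Q :=
  Sum.map (↑) .inr

theorem retained_injective : (retained (Q := Q)).Injective :=
  Sum.map_injective.2 ⟨Subtype.val_injective, Sum.inr_injective⟩

theorem range_retained : Set.range (retained (Q := Q)) = {v | v ∉ (nextGraft Q).T} := by
  ext v
  constructor
  · rintro ⟨x | p, rfl⟩ (⟨u, hu, h⟩ | ⟨c, h⟩)
    · exact x.2 (Sum.inl_injective h ▸ hu)
    all_goals cases h
  · intro hv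
    rcases v with x | c | p
    · exact ⟨.inl ⟨x, fun hx ↦ hv (.inl ⟨x, hx, rfl⟩)⟩, rfl⟩
    · exact (hv (.inr ⟨c, rfl⟩)).elim
    · exact ⟨.inr p, rfl⟩

theorem adj_retained_iff {a b : {v | v ∉ Q.T} ⊕ Q.T × ({v | v ∉ Q.T} ⊕ Q.T)} :
    (nextGraft Q).G.Adj (retained a) (retained b) ↔ (nextGraph Q.core Q.coreNbhd).Adj a b := by
  rcases a with x | ⟨u, y⟩ <;> rcases b with x' | ⟨u', y'⟩
  · exact adj_inl_inl
  · exact adj_inl_copy.trans <| iff_of_false (fun h ↦ x.2 (h.1 ▸ u'.2)) (by simp [nextGraph])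
  · exact (SimpleGraph.adj_comm _ _ _).trans <| adj_inl_copy.trans <|
      iff_of_false (fun h ↦ x'.2 (h.1 ▸ u.2)) (by simp [nextGraph])
  · exact adj_copy_copy.trans (by simp [nextGraph, and_comm])

/-- Deleting the distinguished vertices of `nextGraft Q` leaves `nextGraph Q.core Q.coreNbhd`. -/
noncomputable def coreIso : nextGraph Q.core Q.coreNbhd ≃g (nextGraft Q).core where
  toEquiv := (Equiv.ofInjective _ retained_injective).trans (.setCongr range_retained)
  map_rel_iff' := adj_retained_iff

/-- The distinguished vertices of `nextGraft Q`: those of `Q` and their clones. -/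
def distinguished : Q.T ⊕ Clone Q → Vertex Q :=
  Sum.map (↑) .inl

theorem distinguished_injective : (distinguished (Q := Q)).Injective :=
  Sum.map_injective.2 ⟨Subtype.val_injective, Sum.inl_injective⟩

theorem range_distinguished : Set.range (distinguished (Q := Q)) = (nextGraft Q).T := by
  ext v
  constructor
  · rintro ⟨u | c, rfl⟩
    exacts [.inl ⟨u, u.2, rfl⟩, .inr ⟨c, rfl⟩]
  · rintro (⟨u, hu, rfl⟩ | ⟨c, rfl⟩)
    exacts [⟨.inl ⟨u, hu⟩, rfl⟩, ⟨.inr c, rfl⟩]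

/-- The position of a distinguished vertex: `(u, inl v)` for the vertex of `X_u` identified with the
copy of `v` in `S_u`, and `(u, inr v)` for the one identified with `t_{u,v}`. -/
def label : Q.T ⊕ Clone Q → Q.T × (Q.T ⊕ Q.T)
  | .inl u => (u, .inl u)
  | .inr c => (c.1, c.2)

theorem label_bijective : (label (Q := Q)).Bijective := by
  constructor
  · rintro (u | ⟨u, w, hw⟩) (u' | ⟨u', w', hw'⟩) h <;> grind [label]
  · rintro ⟨u, w⟩
    by_cases hw : w = .inl u
    · exact ⟨.inl u, by rw [hw, label]⟩
    · exact ⟨.inr ⟨u, w, hw⟩, rfl⟩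

theorem adj_distinguished_retained_iff {c : Q.T ⊕ Clone Q}
    {a : {v | v ∉ Q.T} ⊕ Q.T × ({v | v ∉ Q.T} ⊕ Q.T)} :
    (nextGraft Q).G.Adj (distinguished c) (retained a) ↔
      a ∈ nextFamily Q.coreNbhd (label c) := by
  rcases c with u | c <;> rcases a with x | ⟨u', y⟩
  · rw [label, inl_mem_nextFamily]
    exact adj_inl_inl
  · rw [label, inr_mem_nextFamily, eq_comm, ← Subtype.coe_inj]
    exact adj_inl_copy.trans <| and_congr_right fun h ↦ by rw [Subtype.ext h]
  · rw [label, inl_mem_nextFamily]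
    exact adj_clone_inl
  · rw [label, inr_mem_nextFamily]
    exact adj_clone_copy

/-- The sets of `nextFamily Q.coreNbhd` are the neighbourhoods of the distinguished vertices of
`nextGraft Q`, by their labels. -/
noncomputable def familyIso :
    FamilyIso (nextGraph Q.core Q.coreNbhd) (nextFamily Q.coreNbhd)
      (nextGraft Q).core (nextGraft Q).coreNbhd where
  graphIso := coreIso
  indexEquiv :=
    (Equiv.ofBijective _ label_bijective).symm.trans <|
      (Equiv.ofInjective _ distinguished_injective).trans (.setCongr range_distinguished)
  map_mem_iff p a := by
    obtain ⟨c, rfl⟩ := (Equiv.ofBijective _ label_bijective).surjective p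
    rw [Equiv.trans_apply, Equiv.symm_apply_apply]
    exact adj_distinguished_retained_iff

end nextGraft

/-- `K₁` with its single set is `K₂ ∖ {t}` with the neighbourhood of `t`. -/
def baseFamilyIso :
    FamilyIso (⊥ : SimpleGraph Unit) ((↑) : ({Set.univ} : Set (Set Unit)) → Set Unit)
      (GraftData.core ⟨Bool, ⊤, {true}⟩) (GraftData.coreNbhd ⟨Bool, ⊤, {true}⟩) :=
  letI : Unique {v : Bool | v ∉ ({true} : Set Bool)} := ⟨⟨⟨false, by simp⟩⟩, by simp⟩
  { graphIso := ⟨.ofUnique _ _, by simp⟩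
    indexEquiv := .ofUnique _ _
    map_mem_iff := fun ⟨_, rfl⟩ _ ↦ iff_of_true Bool.noConfusion ⟨⟩ }

/-- The `k`-th Burling graph is `G_k ∖ T_k`, and its stable sets are the neighbourhoods in
`G_k ∖ T_k` of the vertices of `T_k`. -/
noncomputable def burlingFamilyIso : ∀ k : ℕ,
    FamilyIso (BurlingPair k).G ((↑) : (BurlingPair k).S → Set (BurlingPair k).V)
      (BurlingGraft k).core (BurlingGraft k).coreNbhd
  | 0 => baseFamilyIso
  | k + 1 => (NEXT.familyIso _).symm.trans <| (burlingFamilyIso k).next.trans nextGraft.familyIso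

/-- For every positive integer `k`, the `k`-th Burling graph `G'_k` is isomorphic to an
induced subgraph of `G_k`; in fact `G'_k` is isomorphic to `G_k ∖ T_k`. -/
theorem burling_isomorphic_induced_subgraph (k : ℕ) (hk : 0 < k) :
    (∃ s : Set (BurlingGraft (k - 1)).V,
      Nonempty ((BurlingPair (k - 1)).G ≃g (BurlingGraft (k - 1)).G.induce s)) ∧
    Nonempty ((BurlingPair (k - 1)).G ≃g
      (BurlingGraft (k - 1)).G.induce {v | v ∉ (BurlingGraft (k - 1)).T}) := by
  have φ := (burlingFamilyIso (k - 1)).graphIso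
  exact ⟨⟨_, ⟨φ⟩⟩, ⟨φ⟩⟩
end

section
/- If W is a triangle-free wheel, then W contains no pair of distinct vertices u,v with N_W(u) = N_W(v). -/
universe u

/-!
In a triangle-free wheel the neighbourhood of the hub `w` is a stable set of at least three
vertices of the rim. A stable set of a cycle is disjoint from its rotation by one step, so it
contains at most half of the vertices, and the rim has length at least 6. On a cycle of length
other than 4 a vertex is determined by its neighbourhood, so two vertices of the rim are never
twins. The hub has no twin either, since a rim vertex has at most two neighbours on the rim.
-/

section CycleGraph

open SimpleGraph

theorem cycleGraph_ncard_neighborSet_le_two {n : ℕ} (i : Fin n) :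
    ((cycleGraph n).neighborSet i).ncard ≤ 2 := by
  match n with
  | 0 => exact i.elim0
  | 1 => simp [cycleGraph_one_eq_bot]
  | _ + 2 =>
    rw [cycleGraph_neighborSet]
    exact (Set.ncard_insert_le _ _).trans_eq (by rw [Set.ncard_singleton])

open Fin.CommRing in
theorem cycleGraph_neighborSet_injective {n : ℕ} (hn : n ≠ 4) :
    Function.Injective (cycleGraph n).neighborSet := by
  match n with
  | 0 | 1 => exact Function.injective_of_subsingleton _
  | 2 => simp [cycleGraph_two_eq_top, Function.Injective]
  | n + 3 =>
    intro i j hij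
    simp only [cycleGraph_neighborSet] at hij
    by_contra hne
    have hsucc : i + 1 = j - 1 :=
      (show i + 1 ∈ ({j - 1, j + 1} : Set _) by simp [← hij]).resolve_right
        (hne ∘ (add_left_inj 1).1)
    have hpred : i - 1 = j + 1 :=
      (show i - 1 ∈ ({j - 1, j + 1} : Set _) by simp [← hij]).resolve_left
        (hne ∘ sub_left_inj.1)
    have hfour : ((4 : ℕ) : Fin (n + 3)) = 0 := by
      push_cast
      linear_combination hsucc - hpred
    have hdvd : n + 3 ∣ 4 := Fin.natCast_eq_zero.1 hfour
    have hle := Nat.le_of_dvd four_pos hdvd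
    obtain rfl | rfl : n = 0 ∨ n = 1 := by omega
    · omega
    · exact hn rfl

theorem two_mul_ncard_le_of_isIndepSet_cycleGraph {n : ℕ} (hn : n ≠ 1) {s : Set (Fin n)}
    (hs : (cycleGraph n).IsIndepSet s) : 2 * s.ncard ≤ n := by
  match n with
  | 0 => simp [Set.eq_empty_of_isEmpty s]
  | n + 2 =>
    have hdisj : Disjoint s ((· + 1) '' s) := by
      rw [Set.disjoint_right]
      rintro _ ⟨i, hi, rfl⟩ hi'
      have hadj : (cycleGraph (n + 2)).Adj i (i + 1) := by simp [cycleGraph_adj]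
      exact hs hi hi' hadj.ne hadj
    calc 2 * s.ncard = s.ncard + ((· + 1) '' s).ncard := by
          rw [Set.ncard_image_of_injective s (add_left_injective 1), two_mul]
      _ = (s ∪ (· + 1) '' s).ncard := (Set.ncard_union_eq hdisj).symm
      _ ≤ n + 2 := by simpa using Set.ncard_le_card (s ∪ (· + 1) '' s)

end CycleGraph

section Embedding

open SimpleGraph

variable {V W : Type*} {G : SimpleGraph V} {H : SimpleGraph W}

theorem isIndepSet_preimage_of_hom (φ : G →g H) {s : Set W} (hs : H.IsIndepSet s) :
    G.IsIndepSet (φ ⁻¹' s) := fun _ ha _ hb _ hab ↦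
  hs ha hb (φ.map_adj hab).ne (φ.map_adj hab)

theorem neighborSet_eq_of_embedding (φ : G ↪g H) {a b : V}
    (h : H.neighborSet (φ a) = H.neighborSet (φ b)) : G.neighborSet a = G.neighborSet b := by
  rw [← φ.preimage_neighborSet, ← φ.preimage_neighborSet, h]

end Embedding

namespace IsWheel

variable {V : Type*} {G : SimpleGraph V}

theorem exists_cycleGraph_embedding (hG : IsWheel G) :
    ∃ (w : V) (n : ℕ) (φ : SimpleGraph.cycleGraph n ↪g G), 4 ≤ n ∧ Set.range φ = {w}ᶜ ∧
      3 ≤ (φ ⁻¹' G.neighborSet w).ncard := by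
  obtain ⟨w, n, hn, ⟨e⟩, hw⟩ := hG
  let φ := (SimpleGraph.Embedding.induce {u | u ≠ w}).comp e.symm.toEmbedding
  have hφ : Set.range φ = {w}ᶜ :=
    (e.symm.surjective.range_comp Subtype.val).trans Subtype.range_coe
  have hsub : G.neighborSet w ⊆ Set.range φ := by
    rw [hφ]
    exact fun u hu ↦ hu.ne'
  refine ⟨w, n, φ, hn, hφ, ?_⟩
  rwa [Set.ncard_preimage_of_injective_subset_range φ.injective hsub]

end IsWheel

/-- A triangle-free wheel contains no pair of distinct vertices with the same
neighbourhood. -/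
theorem wheel_no_twins {V : Type u} (W : SimpleGraph V)
    (hW : IsWheel W) (htf : W.CliqueFree 3) :
    ∀ u v : V, u ≠ v → W.neighborSet u ≠ W.neighborSet v := by
  obtain ⟨w, n, φ, hn, hφ, hw⟩ := hW.exists_cycleGraph_embedding
  have hub_ne_rim (i : Fin n) : W.neighborSet w ≠ W.neighborSet (φ i) := by
    intro h
    rw [h, φ.preimage_neighborSet] at hw
    exact absurd (cycleGraph_ncard_neighborSet_le_two i) (by omega)
  have hindep : (SimpleGraph.cycleGraph n).IsIndepSet (φ ⁻¹' W.neighborSet w) :=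
    isIndepSet_preimage_of_hom φ.toHom (W.isIndepSet_neighborSet_of_triangleFree htf w)
  have hn_six : 6 ≤ n := by
    have hhalf := two_mul_ncard_le_of_isIndepSet_cycleGraph (by omega) hindep
    omega
  have rim_or_hub (x : V) : x = w ∨ x ∈ Set.range φ := by
    rw [hφ]
    exact em _
  intro u v huv hN
  obtain rfl | ⟨i, rfl⟩ := rim_or_hub u <;> obtain rfl | ⟨j, rfl⟩ := rim_or_hub v
  · exact huv rfl
  · exact hub_ne_rim j hN
  · exact hub_ne_rim i hN.symm
  · have hij := cycleGraph_neighborSet_injective (by omega) (neighborSet_eq_of_embedding φ hN)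
    exact huv (congrArg φ hij)
end

section
/- If F is a triangle-free fan, then F contains no pair of distinct vertices u,v with N_F(u) = N_F(v). -/
universe u

/-!
Two equal neighbourhoods in a graph restrict to equal neighbourhoods in every induced subgraph.
In a path of `n` vertices two distinct vertices have the same neighbours only when they are the
ends of a path with `n = 3`, and no vertex of a path shares its neighbourhood with the pivot, which
has at least three neighbours on the path. So the only fan with twins is the one on four vertices,
where the pivot is complete to a path of three vertices and thus lies in a triangle.
-/

open SimpleGraph

section Embedding

variable {V W : Type*} {G : SimpleGraph V} {H : SimpleGraph W}

theorem eq_of_neighborSet_map_eq (φ : G ↪g H) (hG : Function.Injective G.neighborSet) {u v : V}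
    (h : H.neighborSet (φ u) = H.neighborSet (φ v)) : u = v := by
  apply hG
  rw [← φ.preimage_neighborSet, h, φ.preimage_neighborSet]

theorem ncard_neighborSet_map_of_subset_range (φ : G ↪g H) {v : V}
    (hv : H.neighborSet (φ v) ⊆ Set.range φ) :
    (H.neighborSet (φ v)).ncard = (G.neighborSet v).ncard := by
  rw [← φ.preimage_neighborSet, Set.ncard_preimage_of_injective_subset_range φ.injective hv]

theorem neighborSet_injective_of_range_eq_compl_singleton {f : W} (φ : G ↪g H)
    (hφ : Set.range φ = {f}ᶜ) (hG : Function.Injective G.neighborSet)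
    (hf : ∀ v, (H.neighborSet f).ncard ≠ (G.neighborSet v).ncard) :
    Function.Injective H.neighborSet := by
  have eq_or_mem_range (w : W) : w = f ∨ ∃ v, φ v = w := by
    rw [← Set.mem_range, hφ]
    exact em (w = f)
  have neighborSet_ne (v : V) : H.neighborSet f ≠ H.neighborSet (φ v) := by
    intro h
    have hsub : H.neighborSet (φ v) ⊆ Set.range φ := by
      rw [← h, hφ]
      exact H.neighborSet_subset_compl f
    exact hf v (by rw [h, ncard_neighborSet_map_of_subset_range φ hsub])
  intro x y hxy
  obtain rfl | ⟨u, rfl⟩ := eq_or_mem_range x <;> obtain rfl | ⟨v, rfl⟩ := eq_or_mem_range y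
  · rfl
  · exact absurd hxy (neighborSet_ne v)
  · exact absurd hxy.symm (neighborSet_ne u)
  · exact congrArg φ (eq_of_neighborSet_map_eq φ hG hxy)

end Embedding

section Path

variable {n : ℕ}

theorem ncard_neighborSet_pathGraph_le_two (i : Fin n) :
    ((pathGraph n).neighborSet i).ncard ≤ 2 := by
  have hsub : Fin.val '' (pathGraph n).neighborSet i ⊆ {i.val - 1, i.val + 1} := by
    rintro _ ⟨j, hj, rfl⟩
    rw [mem_neighborSet, pathGraph_adj] at hj
    grind
  calc ((pathGraph n).neighborSet i).ncard
      = (Fin.val '' (pathGraph n).neighborSet i).ncard :=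
        (Set.ncard_image_of_injective _ Fin.val_injective).symm
    _ ≤ ({i.val - 1, i.val + 1} : Set ℕ).ncard := Set.ncard_le_ncard hsub (Set.toFinite _)
    _ ≤ 2 := (Set.ncard_insert_le _ _).trans (by rw [Set.ncard_singleton])

theorem neighborSet_pathGraph_injective (hn : n ≠ 3) :
    Function.Injective (pathGraph n).neighborSet := by
  refine .of_lt_imp_ne fun i j hij h ↦ hn ?_
  have adj_iff (k : ℕ) (hk : k < n) :
      (i.val + 1 = k ∨ k + 1 = i.val) ↔ (j.val + 1 = k ∨ k + 1 = j.val) := by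
    simpa only [mem_neighborSet, pathGraph_adj] using Set.ext_iff.mp h ⟨k, hk⟩
  have hi : i.val = 0 := by
    have := adj_iff (i - 1) (by lia)
    lia
  have hj : j.val + 1 = n := by
    by_contra hne
    have := adj_iff (j + 1) (by lia)
    lia
  have hji : j.val = i + 2 := by
    have := adj_iff (i + 1) (by lia)
    lia
  lia

end Path

section Fan

variable {V : Type u} {F : SimpleGraph V}

theorem IsFanWithPivot.exists_pathGraph_embedding {f : V} (hf : IsFanWithPivot F f) :
    ∃ n : ℕ, Nat.card V = n + 1 ∧ ∃ φ : pathGraph n ↪g F, Set.range φ = {f}ᶜ := by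
  classical
  obtain ⟨⟨n, ⟨e⟩⟩, -⟩ := hf
  have hcard : Nat.card V = n + 1 := by
    let vertexEquiv : {u // u ≠ f} ≃ Fin n := e.toEquiv
    rw [← Nat.card_congr (Equiv.optionSubtypeNe f), Nat.card_congr vertexEquiv.optionCongr,
      Finite.card_option, Nat.card_fin]
  refine ⟨n, hcard, (Embedding.induce {u | u ≠ f}).comp e.symm.toEmbedding, ?_⟩
  ext x
  simp

theorem IsFan.natCard_ne_four (hF : IsFan F) (htf : F.CliqueFree 3) : Nat.card V ≠ 4 := by
  obtain ⟨f, hf⟩ := hF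
  obtain ⟨n, hcard, φ, hφ⟩ := hf.exists_pathGraph_embedding
  intro hV
  obtain rfl : n = 3 := by lia
  have hN : F.neighborSet f = Set.range φ := by
    apply Set.eq_of_subset_of_ncard_le
    · rw [hφ]
      exact F.neighborSet_subset_compl f
    · rw [Set.ncard_range_of_injective φ.injective, Nat.card_fin]
      exact hf.2
    · exact Set.finite_range φ
  have hadj : F.Adj (φ 0) (φ 1) := φ.map_adj_iff.mpr (by simp [pathGraph_adj])
  have hindep : F.IsIndepSet (Set.range φ) := hN ▸ isIndepSet_neighborSet_of_triangleFree F htf f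
  exact hindep ⟨0, rfl⟩ ⟨1, rfl⟩ hadj.ne hadj

theorem fan_no_twins_general (hF : IsFan F) (hV : Nat.card V ≠ 4) :
    Function.Injective F.neighborSet := by
  obtain ⟨f, hf⟩ := hF
  obtain ⟨n, hcard, φ, hφ⟩ := hf.exists_pathGraph_embedding
  have hn : n ≠ 3 := by lia
  refine neighborSet_injective_of_range_eq_compl_singleton φ hφ
    (neighborSet_pathGraph_injective hn) fun i ↦ ?_
  exact ((ncard_neighborSet_pathGraph_le_two i).trans_lt hf.2).ne'

end Fan

/-- A triangle-free fan contains no pair of distinct vertices with the same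
neighbourhood. -/
theorem fan_no_twins {V : Type u} (F : SimpleGraph V)
    (hF : IsFan F) (htf : F.CliqueFree 3) :
    ∀ u v : V, u ≠ v → F.neighborSet u ≠ F.neighborSet v :=
  fun _ _ ↦ (fan_no_twins_general hF (hF.natCard_ne_four htf)).ne
end

section
/- No wheel contains an induced theta; that is, no induced subgraph of a wheel is a theta. -/
universe u

/-!
Delete the hub `w`: in the remaining rim every vertex has at most two neighbours, so a branch vertex
of the theta other than `w`, having three neighbours, must be followed by `w` on one of the paths.
As the paths have length at least two, `w` is then an inner vertex of exactly one path. The other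
two form a cycle in the rim, and a cycle in a connected graph of maximum degree two passes through
every vertex. Hence every neighbour of `w` lies on that cycle, while the edges of the theta at `w`
all belong to the first path, so `w` can only be adjacent to the two branch vertices.
-/

theorem start_notMem_tail_support_of_isPath {V : Type*} {G : SimpleGraph V} {u v : V}
    {p : G.Walk u v} (hp : p.IsPath) : u ∉ p.support.tail := by
  have hnodup := hp.support_nodup
  rw [← p.cons_tail_support] at hnodup
  exact (List.nodup_cons.1 hnodup).1

section Cycle

variable {V : Type*} {G : SimpleGraph V} {u v : V} {c : G.Walk u u}

theorem mem_support_of_isCycle_of_adj {w : V} (hc : c.IsCycle) (hv : v ∈ c.support)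
    (hdeg : (G.neighborSet v).encard ≤ 2) (hvw : G.Adj v w) : w ∈ c.support := by
  have hcard : (c.toSubgraph.neighborSet v).encard = 2 := by
    rw [← c.finite_neighborSet_toSubgraph.cast_ncard_eq,
      hc.ncard_neighborSet_toSubgraph_eq_two hv, Nat.cast_ofNat]
  have heq : c.toSubgraph.neighborSet v = G.neighborSet v :=
    c.finite_neighborSet_toSubgraph.eq_of_subset_of_encard_le
      (c.toSubgraph.neighborSet_subset v) (hdeg.trans_eq hcard.symm)
  have hadj : w ∈ c.toSubgraph.neighborSet v := heq ▸ hvw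
  exact c.mem_verts_toSubgraph.1 (c.toSubgraph.neighborSet_subset_verts v hadj)

theorem mem_support_of_isCycle_of_preconnected (hG : G.Preconnected)
    (hdeg : ∀ x, (G.neighborSet x).encard ≤ 2) (hc : c.IsCycle) (v : V) : v ∈ c.support := by
  by_contra hv
  obtain ⟨q⟩ := hG u v
  obtain ⟨d, -, hfst, hsnd⟩ :=
    q.exists_boundary_dart {x | x ∈ c.support} c.start_mem_support hv
  exact hsnd (mem_support_of_isCycle_of_adj hc hfst (hdeg _) d.adj)

theorem mem_support_of_isCycle_of_induce_preconnected {t : Set V}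
    (hconn : (G.induce t).Preconnected) (hdeg : ∀ x, ((G.induce t).neighborSet x).encard ≤ 2)
    (hc : c.IsCycle) (hct : ∀ x ∈ c.support, x ∈ t) (hv : v ∈ t) : v ∈ c.support := by
  have hc' : (c.induce t hct).IsCycle := by
    refine .of_map (f := (SimpleGraph.Embedding.induce t).toHom) ?_
    rwa [SimpleGraph.Walk.map_induce]
  simpa using mem_support_of_isCycle_of_preconnected hconn hdeg hc' ⟨v, hv⟩

end Cycle

/-- The paths of a generalized theta: pairwise internally disjoint paths of length at least two
joining two distinct vertices. A theta has three of them. Edges and vertices of the ambient graph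
outside the paths are allowed. -/
structure IsThetaFamily {ι V : Type*} {G : SimpleGraph V} {a b : V} (p : ι → G.Walk a b) :
    Prop where
  start_ne_end : a ≠ b
  isPath (i : ι) : (p i).IsPath
  two_le_length (i : ι) : 2 ≤ (p i).length
  eq_start_or_eq_end {i j : ι} (hij : i ≠ j) {v : V} (hi : v ∈ (p i).support)
    (hj : v ∈ (p j).support) : v = a ∨ v = b

namespace IsThetaFamily

variable {ι V : Type*} {G : SimpleGraph V} {a b w : V} {p : ι → G.Walk a b} {i j : ι}

theorem map {V' : Type*} {G' : SimpleGraph V'} (hp : IsThetaFamily p) (f : G →g G')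
    (hf : Function.Injective f) : IsThetaFamily fun i ↦ (p i).map f where
  start_ne_end := hf.ne hp.start_ne_end
  isPath i := (hp.isPath i).map hf
  two_le_length i := by simpa using hp.two_le_length i
  eq_start_or_eq_end hij v hi hj := by
    simp only [SimpleGraph.Walk.support_map, List.mem_map] at hi hj
    obtain ⟨x, hx, rfl⟩ := hi
    obtain ⟨y, hy, hyx⟩ := hj
    obtain rfl := hf hyx
    exact (hp.eq_start_or_eq_end hij hx hy).imp (congrArg f) (congrArg f)

theorem reverse (hp : IsThetaFamily p) : IsThetaFamily fun i ↦ (p i).reverse where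
  start_ne_end := hp.start_ne_end.symm
  isPath i := (hp.isPath i).reverse
  two_le_length i := by simpa using hp.two_le_length i
  eq_start_or_eq_end hij v hi hj := by
    simp only [SimpleGraph.Walk.support_reverse, List.mem_reverse] at hi hj
    exact (hp.eq_start_or_eq_end hij hi hj).symm

theorem index_eq (hp : IsThetaFamily p) {v : V} (ha : v ≠ a) (hb : v ≠ b)
    (hi : v ∈ (p i).support) (hj : v ∈ (p j).support) : i = j := by
  by_contra hij
  exact (hp.eq_start_or_eq_end hij hi hj).elim ha hb

theorem adj_snd (hp : IsThetaFamily p) (i : ι) : G.Adj a (p i).snd :=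
  (p i).adj_snd (SimpleGraph.Walk.not_nil_of_ne hp.start_ne_end)

theorem snd_ne_end (hp : IsThetaFamily p) (i : ι) : (p i).snd ≠ b := by
  have hlen := hp.two_le_length i
  rw [ne_eq, (hp.isPath i).getVert_eq_end_iff (by lia)]
  lia

theorem snd_injective (hp : IsThetaFamily p) : Function.Injective fun i ↦ (p i).snd := by
  intro i j (hij : (p i).snd = (p j).snd)
  exact hp.index_eq (hp.adj_snd i).ne' (hp.snd_ne_end i) ((p i).getVert_mem_support 1)
    (hij ▸ (p j).getVert_mem_support 1)

theorem isCycle_append_reverse (hp : IsThetaFamily p) (hij : i ≠ j) :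
    ((p i).append (p j).reverse).IsCycle := by
  refine (hp.isPath i).isCycle_append (hp.isPath j).reverse (fun v hi hj ↦ ?_)
    (.inl (hp.two_le_length i))
  have hva : v ≠ a := by
    rintro rfl
    exact start_notMem_tail_support_of_isPath (hp.isPath i) hi
  have hvb : v ≠ b := by
    rintro rfl
    exact start_notMem_tail_support_of_isPath (hp.isPath j).reverse hj
  have hj' : v ∈ (p j).support := by simpa using List.mem_of_mem_tail hj
  exact hij (hp.index_eq hva hvb (List.mem_of_mem_tail hi) hj')

theorem exists_snd_notMem {t : Set V} (hp : IsThetaFamily p) (ha : a ∈ t)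
    (hdeg : ((G.induce t).neighborSet ⟨a, ha⟩).encard < ENat.card ι) : ∃ i, (p i).snd ∉ t := by
  by_contra! hsnd
  let f (i : ι) : (G.induce t).neighborSet ⟨a, ha⟩ := ⟨⟨(p i).snd, hsnd i⟩, hp.adj_snd i⟩
  have hf : Function.Injective f := fun i j hij ↦
    hp.snd_injective (congrArg (fun x ↦ x.1.1) hij)
  exact hdeg.not_ge (ENat.card_le_card_of_injective hf)

theorem exists_snd_eq (hp : IsThetaFamily p) (ha : a ≠ w)
    (hdeg : ∀ v, ((G.induce {u | u ≠ w}).neighborSet v).encard < ENat.card ι) :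
    ∃ i, (p i).snd = w := by
  simpa using hp.exists_snd_notMem ha (hdeg _)

theorem end_ne_of_start_ne (hp : IsThetaFamily p) (ha : a ≠ w)
    (hdeg : ∀ v, ((G.induce {u | u ≠ w}).neighborSet v).encard < ENat.card ι) : b ≠ w := by
  obtain ⟨i, hi⟩ := hp.exists_snd_eq ha hdeg
  exact hi ▸ (hp.snd_ne_end i).symm

theorem start_ne (hp : IsThetaFamily p)
    (hdeg : ∀ v, ((G.induce {u | u ≠ w}).neighborSet v).encard < ENat.card ι) : a ≠ w := by
  rintro rfl
  exact hp.reverse.end_ne_of_start_ne hp.start_ne_end.symm hdeg rfl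

theorem mem_support_or_mem_support (hp : IsThetaFamily p) (hij : i ≠ j) {t : Set V}
    (hconn : (G.induce t).Preconnected) (hdeg : ∀ v, ((G.induce t).neighborSet v).encard ≤ 2)
    (hi : ∀ v ∈ (p i).support, v ∈ t) (hj : ∀ v ∈ (p j).support, v ∈ t) {v : V} (hv : v ∈ t) :
    v ∈ (p i).support ∨ v ∈ (p j).support := by
  have hcycle : v ∈ ((p i).append (p j).reverse).support := by
    refine mem_support_of_isCycle_of_induce_preconnected hconn hdeg
      (hp.isCycle_append_reverse hij) (fun x hx ↦ ?_) hv
    rw [SimpleGraph.Walk.mem_support_append_iff, SimpleGraph.Walk.support_reverse,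
      List.mem_reverse] at hx
    exact hx.elim (hi x) (hj x)
  simpa using hcycle

theorem neighborSet_subset_pair (hp : IsThetaFamily p) (hι : 3 ≤ ENat.card ι)
    (hedge : ∀ i j, ∀ u ∈ (p i).support, ∀ v ∈ (p j).support, G.Adj u v →
      ∃ k, s(u, v) ∈ (p k).edges)
    (hconn : (G.induce {u | u ≠ w}).Preconnected)
    (hdeg : ∀ v, ((G.induce {u | u ≠ w}).neighborSet v).encard ≤ 2) :
    G.neighborSet w ⊆ {a, b} := by
  have hdeg' (v) : ((G.induce {u | u ≠ w}).neighborSet v).encard < ENat.card ι :=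
    (hdeg v).trans_lt (lt_of_lt_of_le (by norm_num) hι)
  have ha : a ≠ w := hp.start_ne hdeg'
  have hb : b ≠ w := hp.end_ne_of_start_ne ha hdeg'
  obtain ⟨i, hi⟩ := hp.exists_snd_eq ha hdeg'
  have hwi : w ∈ (p i).support := hi ▸ (p i).getVert_mem_support 1
  have avoids {j : ι} (hj : j ≠ i) : ∀ v ∈ (p j).support, v ≠ w := by
    rintro v hv rfl
    exact hj (hp.index_eq ha.symm hb.symm hv hwi)
  obtain ⟨j, hji, -⟩ := ENat.exists_ne_ne_of_three_le hι i i
  obtain ⟨k, hki, hkj⟩ := ENat.exists_ne_ne_of_three_le hι i j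
  intro v (hwv : G.Adj w v)
  obtain ⟨l, hli, hvl⟩ : ∃ l ≠ i, v ∈ (p l).support :=
    (hp.mem_support_or_mem_support hkj hconn hdeg (avoids hki) (avoids hji) hwv.ne').elim
      (⟨k, hki, ·⟩) (⟨j, hji, ·⟩)
  obtain ⟨m, hm⟩ := hedge i l w hwi v hvl hwv
  obtain rfl : m = i :=
    hp.index_eq ha.symm hb.symm ((p m).fst_mem_support_of_mem_edges hm) hwi
  exact hp.eq_start_or_eq_end hli hvl ((p m).snd_mem_support_of_mem_edges hm)

end IsThetaFamily

theorem IsTheta.exists_isThetaFamily {V : Type u} {G : SimpleGraph V} (hG : IsTheta G) :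
    ∃ (a b : V) (p : Fin 3 → G.Walk a b),
      IsThetaFamily p ∧ ∀ e ∈ G.edgeSet, ∃ i, e ∈ (p i).edges := by
  obtain ⟨a, b, p, q, r, hab, hp, hq, hr, hp₂, hq₂, hr₂, hpq, hpr, hqr, -, hedges⟩ := hG
  refine ⟨a, b, ![p, q, r], ⟨hab, ?_, ?_, ?_⟩, ?_⟩
  · simp [Fin.forall_fin_succ, hp, hq, hr]
  · simp [Fin.forall_fin_succ, hp₂, hq₂, hr₂]
  · intro i j hij v hi hj
    fin_cases i <;> fin_cases j
    exacts [absurd rfl hij, hpq v hi hj, hpr v hi hj, hpq v hj hi, absurd rfl hij, hqr v hi hj,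
      hpr v hj hi, hqr v hj hi, absurd rfl hij]
  · simpa [Fin.exists_fin_succ] using hedges

theorem IsTheta.exists_isThetaFamily_of_induce {V : Type u} {G : SimpleGraph V} {s : Set V}
    (hs : IsTheta (G.induce s)) :
    ∃ (a b : V) (p : Fin 3 → G.Walk a b), IsThetaFamily p ∧
      ∀ i j, ∀ u ∈ (p i).support, ∀ v ∈ (p j).support, G.Adj u v →
        ∃ k, s(u, v) ∈ (p k).edges := by
  obtain ⟨a, b, p, hp, hedges⟩ := hs.exists_isThetaFamily
  refine ⟨_, _, _, hp.map (SimpleGraph.Embedding.induce s).toHom Subtype.val_injective, ?_⟩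
  intro i j u hu v hv huv
  simp only [SimpleGraph.Walk.support_map, List.mem_map] at hu hv
  obtain ⟨x, -, rfl⟩ := hu
  obtain ⟨y, -, rfl⟩ := hv
  obtain ⟨k, hk⟩ := hedges s(x, y) huv
  refine ⟨k, ?_⟩
  rw [SimpleGraph.Walk.edges_map]
  exact List.mem_map_of_mem hk

theorem wheel_no_induced_theta_general {V : Type u} {W : SimpleGraph V} {w : V}
    (hconn : (W.induce {u | u ≠ w}).Preconnected)
    (hdeg : ∀ v, ((W.induce {u | u ≠ w}).neighborSet v).encard ≤ 2)
    (hw : 3 ≤ (W.neighborSet w).encard) (s : Set V) : ¬ IsTheta (W.induce s) := by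
  intro hs
  obtain ⟨a, b, p, hp, hedge⟩ := hs.exists_isThetaFamily_of_induce
  have hsub : W.neighborSet w ⊆ {a, b} := hp.neighborSet_subset_pair (by simp) hedge hconn hdeg
  have hle : (3 : ℕ∞) ≤ 2 :=
    calc
      3 ≤ (W.neighborSet w).encard := hw
      _ ≤ ({a, b} : Set V).encard := Set.encard_le_encard hsub
      _ = 2 := Set.encard_pair hp.start_ne_end
  exact absurd hle (by norm_num)

theorem encard_neighborSet_cycleGraph_le_two {n : ℕ} (v : Fin n) :
    ((SimpleGraph.cycleGraph n).neighborSet v).encard ≤ 2 := by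
  match n with
  | 0 => exact v.elim0
  | 1 =>
    exact (Set.encard_le_one_iff_subsingleton.2 Set.subsingleton_of_subsingleton).trans one_le_two
  | n + 2 =>
    rw [SimpleGraph.cycleGraph_neighborSet]
    exact (Set.encard_insert_le _ _).trans_eq (by simp [one_add_one_eq_two])

theorem IsWheel.exists_hub {V : Type u} {W : SimpleGraph V} (hW : IsWheel W) :
    ∃ w, (W.induce {u | u ≠ w}).Preconnected ∧
      (∀ v, ((W.induce {u | u ≠ w}).neighborSet v).encard ≤ 2) ∧
      3 ≤ (W.neighborSet w).encard := by
  obtain ⟨w, n, -, ⟨e⟩, hw⟩ := hW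
  refine ⟨w, e.preconnected_iff.2 SimpleGraph.cycleGraph_preconnected, fun v ↦ ?_, ?_⟩
  · exact (Set.encard_congr (e.mapNeighborSet v)).trans_le
      (encard_neighborSet_cycleGraph_le_two (e v))
  · rw [← (Set.finite_of_ncard_pos (by lia)).cast_ncard_eq]
    exact_mod_cast hw

/-- No wheel contains an induced theta. -/
theorem wheel_no_induced_theta {V : Type u} (W : SimpleGraph V) (hW : IsWheel W)
    (s : Set V) : ¬ IsTheta (W.induce s) := by
  obtain ⟨w, hconn, hdeg, hw⟩ := hW.exists_hub
  exact wheel_no_induced_theta_general hconn hdeg hw s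
end

section
/- For every positive integer k, in any proper colouring of the graph G_k (with any number of colours), there is a vertex t ∈ T_k whose neighbourhood contains vertices of at least k distinct colours; consequently, G_k has chromatic number at least k+1. -/
universe u

/-!
By induction on `k`: a proper colouring `C` of `G_{k+1}` restricts to the base copy of `G_k`, which
yields `u ∈ T_k` whose neighbourhood carries a set `A` of at least `k` colours, and then to the copy
of `G_k` inside `H'_u`, which yields `v ∈ T_k` with a set `B` of at least `k` colours. The vertices
of `X_u` identified with the copy of `v` and with the pendant `t_{u,v}` both see all of `A`. The
former also sees `B`, which is enough if `A ≠ B`. The latter also sees the clone `v_u`, whose colour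
is not in `B`, which is enough if `A = B`.
-/

theorem add_one_le_encard_of_insert_subset {α : Type*} {a : α} {s t : Set α} {k : ℕ∞}
    (hs : k ≤ s.encard) (ha : a ∉ s) (hst : insert a s ⊆ t) : k + 1 ≤ t.encard :=
  calc
    k + 1 ≤ s.encard + 1 := by gcongr
    _ = (insert a s).encard := (Set.encard_insert_of_notMem ha).symm
    _ ≤ t.encard := Set.encard_le_encard hst

theorem add_one_le_encard_union_of_ne {α : Type*} {s t : Set α} {k : ℕ∞} (hne : s ≠ t)
    (hs : k ≤ s.encard) (ht : k ≤ t.encard) : k + 1 ≤ (s ∪ t).encard := by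
  obtain ⟨a, ⟨has, hat⟩ | ⟨hat, has⟩⟩ := Set.symmDiff_nonempty.2 hne
  · exact add_one_le_encard_of_insert_subset ht hat
      (Set.insert_subset (.inl has) Set.subset_union_right)
  · exact add_one_le_encard_of_insert_subset hs has
      (Set.insert_subset (.inr hat) Set.subset_union_left)

section NeighborColors

variable {V : Type*} {G : SimpleGraph V}

theorem coloring_apply_notMem_image_neighborSet {α : Type*} (C : G.Coloring α) (v : V) :
    C v ∉ C '' G.neighborSet v := by
  rintro ⟨w, hvw, hwv⟩
  exact C.valid hvw hwv.symm

theorem add_one_le_chromaticNumber_of_le_encard_image_neighborSet {k : ℕ∞}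
    (h : ∀ (n : ℕ) (C : G.Coloring (Fin n)), ∃ v, k ≤ (C '' G.neighborSet v).encard) :
    k + 1 ≤ G.chromaticNumber := by
  refine le_iInf₂ fun n ⟨C⟩ ↦ ?_
  obtain ⟨v, hv⟩ := h n C
  calc
    k + 1 ≤ (Set.univ : Set (Fin n)).encard :=
      add_one_le_encard_of_insert_subset hv (coloring_apply_notMem_image_neighborSet C v)
        (Set.subset_univ _)
    _ = n := by simp

end NeighborColors

namespace GraftData

/-- Every proper colouring of the graft with colours in `α` gives at least `k` colours to the
neighbourhood of some distinguished vertex. Counting by `encard` avoids the junk value of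
`ncard` at infinite sets of colours. -/
def ForcesNeighborColors (P : GraftData) (α : Type*) (k : ℕ∞) : Prop :=
  ∀ C : P.G.Coloring α, ∃ t ∈ P.T, k ≤ (C '' P.G.neighborSet t).encard

variable {P : GraftData}

instance finite_nextGraft [Finite P.V] : Finite (nextGraft P).V := by
  unfold nextGraft
  infer_instance

theorem nextGraft_adj_inl_inl {x y : P.V} :
    (nextGraft P).G.Adj (Sum.inl x) (Sum.inl y) ↔ P.G.Adj x y := by
  constructor
  · rintro ⟨-, h | h⟩ <;> simpa [P.G.adj_comm] using h
  · exact fun h ↦ ⟨fun hxy ↦ h.ne (Sum.inl_injective hxy), .inl (.inl ⟨x, y, rfl, rfl, h⟩)⟩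

theorem nextGraft_adj_inl_clone {x : P.V} {c : Σ u : P.T, {w : P.T ⊕ P.T // w ≠ Sum.inl u}} :
    (nextGraft P).G.Adj (Sum.inl x) (Sum.inr (Sum.inl c)) ↔ P.G.Adj c.1 x := by
  constructor
  · rintro ⟨-, (⟨_, _, -, hc, -⟩ | ⟨_, _, _, hx, hc, hux⟩ | h) | h⟩
    · cases hc
    · cases hx
      cases hc
      exact hux
    · simp at h
    · simp at h
  · exact fun h ↦ ⟨Sum.inl_ne_inr, .inl (.inr (.inl ⟨x, c.1, c.2, rfl, rfl, h⟩))⟩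

theorem nextGraft_not_adj_clone_clone {c d : Σ u : P.T, {w : P.T ⊕ P.T // w ≠ Sum.inl u}} :
    ¬ (nextGraft P).G.Adj (Sum.inr (Sum.inl c)) (Sum.inr (Sum.inl d)) := by
  rintro ⟨-, h | h⟩ <;> simp at h

/-- The copy of `G_k` in `G_{k+1}` onto which the copies `H'_u` are joined. -/
def baseHom (P : GraftData) : P.G →g (nextGraft P).G where
  toFun := Sum.inl
  map_rel' := nextGraft_adj_inl_inl.2

open Classical in
/-- The vertex of `X_u` that is identified with the vertex `w` of `S'_u`, where `inl v` stands for
the copy of `v` in `S_u` and `inr v` for the pendant `t_{u,v}`. The vertex `u` itself is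
identified with its own copy. -/
noncomputable def gluedVertex (u : P.T) (w : P.T ⊕ P.T) : (nextGraft P).V :=
  if hw : w = Sum.inl u then Sum.inl u else Sum.inr (Sum.inl ⟨u, w, hw⟩)

theorem gluedVertex_inl_self (u : P.T) : gluedVertex u (Sum.inl u) = Sum.inl (u : P.V) :=
  dif_pos rfl

theorem gluedVertex_of_ne {u : P.T} {w : P.T ⊕ P.T} (hw : w ≠ Sum.inl u) :
    gluedVertex u w = Sum.inr (Sum.inl ⟨u, w, hw⟩) :=
  dif_neg hw

open Classical in
/-- The vertex of `H'_u` that represents the vertex `x` of `G_k`: its copy if `x ∉ T_k`, and the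
clone `x_u` if `x ∈ T_k`. -/
noncomputable def copyVertex (u : P.T) (x : P.V) : (nextGraft P).V :=
  if hx : x ∈ P.T then Sum.inr (Sum.inr (u, Sum.inr ⟨x, hx⟩))
  else Sum.inr (Sum.inr (u, Sum.inl ⟨x, hx⟩))

theorem copyVertex_of_mem (u : P.T) {x : P.V} (hx : x ∈ P.T) :
    copyVertex u x = Sum.inr (Sum.inr (u, Sum.inr ⟨x, hx⟩)) :=
  dif_pos hx

theorem copyVertex_of_notMem (u : P.T) {x : P.V} (hx : x ∉ P.T) :
    copyVertex u x = Sum.inr (Sum.inr (u, Sum.inl ⟨x, hx⟩)) :=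
  dif_neg hx

theorem mem_nextGraft_T_iff {a : (nextGraft P).V} :
    a ∈ (nextGraft P).T ↔ ∃ (u : P.T) (w : P.T ⊕ P.T), gluedVertex u w = a := by
  constructor
  · rintro (⟨u, hu, rfl⟩ | ⟨⟨u, w, hw⟩, rfl⟩)
    · exact ⟨⟨u, hu⟩, Sum.inl ⟨u, hu⟩, gluedVertex_inl_self _⟩
    · exact ⟨u, w, gluedVertex_of_ne hw⟩
  · rintro ⟨u, w, rfl⟩
    obtain rfl | hw := eq_or_ne w (Sum.inl u)
    · exact .inl ⟨u, u.2, gluedVertex_inl_self u⟩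
    · exact .inr ⟨_, gluedVertex_of_ne hw⟩

theorem adj_of_adj_gluedVertex {u u' : P.T} {w w' : P.T ⊕ P.T}
    (h : (nextGraft P).G.Adj (gluedVertex u w) (gluedVertex u' w')) : P.G.Adj u u' := by
  obtain rfl | hw := eq_or_ne w (Sum.inl u) <;> obtain rfl | hw' := eq_or_ne w' (Sum.inl u')
  · rw [gluedVertex_inl_self, gluedVertex_inl_self] at h
    exact nextGraft_adj_inl_inl.1 h
  · rw [gluedVertex_inl_self, gluedVertex_of_ne hw'] at h
    exact (nextGraft_adj_inl_clone.1 h).symm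
  · rw [gluedVertex_of_ne hw, gluedVertex_inl_self] at h
    exact nextGraft_adj_inl_clone.1 h.symm
  · rw [gluedVertex_of_ne hw, gluedVertex_of_ne hw'] at h
    exact (nextGraft_not_adj_clone_clone h).elim

theorem isIndepSet_nextGraft (hT : P.G.IsIndepSet P.T) :
    (nextGraft P).G.IsIndepSet (nextGraft P).T := by
  intro a ha b hb _ hab
  obtain ⟨u, w, rfl⟩ := mem_nextGraft_T_iff.1 ha
  obtain ⟨u', w', rfl⟩ := mem_nextGraft_T_iff.1 hb
  have huu' := adj_of_adj_gluedVertex hab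
  exact hT u.2 u'.2 huu'.ne huu'

theorem adj_gluedVertex_baseHom {u : P.T} {x : P.V} (hux : P.G.Adj u x) (w : P.T ⊕ P.T) :
    (nextGraft P).G.Adj (gluedVertex u w) (P.baseHom x) := by
  obtain rfl | hw := eq_or_ne w (Sum.inl u)
  · rw [gluedVertex_inl_self]
    exact nextGraft_adj_inl_inl.2 hux
  · rw [gluedVertex_of_ne hw]
    exact (nextGraft_adj_inl_clone.2 hux).symm

theorem adj_gluedVertex_inl_copyVertex (u : P.T) {v : P.T} {x : P.V} (hvx : P.G.Adj v x)
    (hx : x ∉ P.T) : (nextGraft P).G.Adj (gluedVertex u (Sum.inl v)) (copyVertex u x) := by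
  rw [copyVertex_of_notMem u hx]
  obtain rfl | hvu := eq_or_ne v u
  · rw [gluedVertex_inl_self]
    exact ⟨Sum.inl_ne_inr, .inl (.inr (.inr (.inl ⟨v, ⟨x, hx⟩, rfl, rfl, hvx⟩)))⟩
  · rw [gluedVertex_of_ne (Sum.inl_injective.ne hvu)]
    exact ⟨fun h ↦ Sum.inl_ne_inr (Sum.inr_injective h),
      .inl (.inr (.inr (.inr (.inl ⟨u, _, v, ⟨x, hx⟩, rfl, rfl, rfl, hvx⟩))))⟩

theorem adj_gluedVertex_inr_copyVertex (u v : P.T) :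
    (nextGraft P).G.Adj (gluedVertex u (Sum.inr v)) (copyVertex u v) := by
  rw [gluedVertex_of_ne Sum.inr_ne_inl, copyVertex_of_mem u v.2]
  exact ⟨fun h ↦ Sum.inl_ne_inr (Sum.inr_injective h),
    .inl (.inr (.inr (.inr (.inr (.inl ⟨u, _, v, rfl, rfl, rfl⟩)))))⟩

theorem adj_copyVertex (u : P.T) {x y : P.V} (hxy : P.G.Adj x y) (hx : x ∉ P.T) :
    (nextGraft P).G.Adj (copyVertex u x) (copyVertex u y) := by
  rw [copyVertex_of_notMem u hx]
  by_cases hy : y ∈ P.T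
  · rw [copyVertex_of_mem u hy]
    exact ⟨by simp, .inl (.inr (.inr (.inr (.inr (.inr (.inr
      ⟨u, ⟨x, hx⟩, ⟨y, hy⟩, rfl, rfl, hxy.symm⟩))))))⟩
  · rw [copyVertex_of_notMem u hy]
    exact ⟨by simpa using hxy.ne, .inl (.inr (.inr (.inr (.inr (.inr (.inl
      ⟨u, ⟨x, hx⟩, ⟨y, hy⟩, rfl, rfl, hxy⟩))))))⟩

/-- The copy of `G_k` inside `H'_u`, in which every vertex `v ∈ T_k` is represented by its clone
`v_u`. -/
noncomputable def copyHom (hT : P.G.IsIndepSet P.T) (u : P.T) : P.G →g (nextGraft P).G where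
  toFun := copyVertex u
  map_rel' {x y} hxy := by
    by_cases hx : x ∈ P.T
    · exact (adj_copyVertex u hxy.symm fun hy ↦ hT hx hy hxy.ne hxy).symm
    · exact adj_copyVertex u hxy hx

theorem forcesNeighborColors_nextGraft {α : Type*} {k : ℕ∞} (h : P.ForcesNeighborColors α k)
    (hT : P.G.IsIndepSet P.T) : (nextGraft P).ForcesNeighborColors α (k + 1) := by
  intro C
  obtain ⟨u, hu, hA⟩ := h (C.comp P.baseHom)
  lift u to P.T using hu
  obtain ⟨v, hv, hB⟩ := h (C.comp (copyHom hT u))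
  lift v to P.T using hv
  set A := C.comp P.baseHom '' P.G.neighborSet u
  set B := C.comp (copyHom hT u) '' P.G.neighborSet v
  have hA_sub (w : P.T ⊕ P.T) : A ⊆ C '' (nextGraft P).G.neighborSet (gluedVertex u w) := by
    rintro _ ⟨x, hux, rfl⟩
    exact ⟨P.baseHom x, adj_gluedVertex_baseHom hux w, rfl⟩
  by_cases hAB : A = B
  · have hv_mem : C (copyVertex u v) ∈
        C '' (nextGraft P).G.neighborSet (gluedVertex u (Sum.inr v)) :=
      ⟨_, adj_gluedVertex_inr_copyVertex u v, rfl⟩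
    have hv_notMem : C (copyVertex u v) ∉ A :=
      hAB ▸ coloring_apply_notMem_image_neighborSet (C.comp (copyHom hT u)) (v : P.V)
    exact ⟨_, mem_nextGraft_T_iff.2 ⟨u, Sum.inr v, rfl⟩,
      add_one_le_encard_of_insert_subset hA hv_notMem (Set.insert_subset hv_mem (hA_sub _))⟩
  · have hB_sub : B ⊆ C '' (nextGraft P).G.neighborSet (gluedVertex u (Sum.inl v)) := by
      rintro _ ⟨x, hvx : P.G.Adj v x, rfl⟩
      exact ⟨copyVertex u x,
        adj_gluedVertex_inl_copyVertex u hvx fun hx ↦ hT v.2 hx hvx.ne hvx, rfl⟩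
    exact ⟨_, mem_nextGraft_T_iff.2 ⟨u, Sum.inl v, rfl⟩,
      (add_one_le_encard_union_of_ne hAB hA hB).trans
        (Set.encard_le_encard (Set.union_subset (hA_sub _) hB_sub))⟩

end GraftData

instance finite_burlingGraft (k : ℕ) : Finite (BurlingGraft k).V := by
  induction k with
  | zero => exact inferInstanceAs (Finite Bool)
  | succ k ih => exact GraftData.finite_nextGraft

theorem isIndepSet_burlingGraft (k : ℕ) : (BurlingGraft k).G.IsIndepSet (BurlingGraft k).T := by
  induction k with
  | zero => exact Set.pairwise_singleton _ _
  | succ k ih => exact GraftData.isIndepSet_nextGraft ih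

theorem forcesNeighborColors_burlingGraft (α : Type*) (k : ℕ) :
    (BurlingGraft k).ForcesNeighborColors α (k + 1) := by
  induction k with
  | zero =>
    intro C
    have hadj : (⊤ : SimpleGraph Bool).Adj true false := by simp
    refine ⟨true, rfl, ?_⟩
    rw [Nat.cast_zero, zero_add, Set.one_le_encard_iff_nonempty]
    exact ⟨_, false, hadj, rfl⟩
  | succ k ih =>
    rw [Nat.cast_succ]
    exact GraftData.forcesNeighborColors_nextGraft ih (isIndepSet_burlingGraft k)

/-- For every positive integer `k`, any proper colouring of `G_k` gives at least `k` colours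
to the neighbourhood of some vertex of `T_k`; consequently `G_k` has chromatic number at
least `k + 1`. -/
theorem burlingGraft_chromatic (k : ℕ) (hk : 0 < k) :
    (∀ (α : Type) (C : (BurlingGraft (k - 1)).G.Coloring α),
      ∃ t ∈ (BurlingGraft (k - 1)).T,
        k ≤ (⇑C '' ((BurlingGraft (k - 1)).G.neighborSet t)).ncard) ∧
    (k : ℕ∞) + 1 ≤ (BurlingGraft (k - 1)).G.chromaticNumber := by
  obtain ⟨m, rfl⟩ := Nat.exists_eq_succ_of_ne_zero hk.ne'
  rw [Nat.succ_sub_one, Nat.cast_succ]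
  refine ⟨fun α C ↦ ?_, add_one_le_chromaticNumber_of_le_encard_image_neighborSet fun n C ↦ ?_⟩
  · obtain ⟨t, ht, hcolors⟩ := forcesNeighborColors_burlingGraft α m C
    refine ⟨t, ht, ?_⟩
    rwa [← Nat.cast_succ, ← (Set.toFinite _).cast_ncard_eq, Nat.cast_le] at hcolors
  · obtain ⟨t, -, hcolors⟩ := forcesNeighborColors_burlingGraft (Fin n) m C
    exact ⟨t, hcolors⟩
end
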